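/- Let V be a real vector space and let gl(V) = End(V) with commutator [A,B] = A∘B − B∘A. Set g̃₋₁ := V and g̃₀ := V ⊕ gl(V), and define: l̃₁(m) := (m, 0); l̃₂((u,A),(v,B)) := ( ½(A(v) − B(u)), [A,B] ); l̃₂((u,A),m) := ½A(m); l̃₃((u,A),(v,B),(w,C)) := −¼( [A,B](w) + [B,C](u) + [C,A](v) ). Then (g̃₀, g̃₋₁, l̃₁, l̃₂, l̃₃) is a 2-term L∞-algebra. (This is the 2-term L∞-algebra associated to the omni-Lie algebra V ⊕ gl(V).) -/

import Mathlib

/-- A 2-term L∞-algebra over ℝ. -/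
structure TwoTermLinfty (G0 G1 : Type*) [AddCommGroup G0] [Module ℝ G0]
    [AddCommGroup G1] [Module ℝ G1] where
  l1 : G1 →ₗ[ℝ] G0
  l2 : G0 →ₗ[ℝ] G0 →ₗ[ℝ] G0
  l2' : G0 →ₗ[ℝ] G1 →ₗ[ℝ] G1
  l3 : G0 →ₗ[ℝ] G0 →ₗ[ℝ] G0 →ₗ[ℝ] G1
  skew : ∀ x y, l2 x y = - l2 y x
  alt₁ : ∀ x y z, l3 x y z = - l3 y x z
  alt₂ : ∀ x y z, l3 x y z = - l3 x z y
  ident_a : ∀ x m, l1 (l2' x m) = l2 x (l1 m)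
  ident_b : ∀ m n, l2' (l1 m) n = - l2' (l1 n) m
  ident_c : ∀ x y z,
    l2 x (l2 y z) + l2 y (l2 z x) + l2 z (l2 x y) = l1 (l3 x y z)
  ident_d : ∀ x y m,
    l3 x y (l1 m) = l2' x (l2' y m) - l2' y (l2' x m) - l2' (l2 x y) m
  ident_e : ∀ w x y z,
    l3 (l2 w x) y z - l3 (l2 w y) x z + l3 (l2 w z) x y + l3 (l2 x y) w z
      - l3 (l2 x z) w y + l3 (l2 y z) w x
    = l2' w (l3 x y z) - l2' x (l3 w y z) + l2' y (l3 w x z) - l2' z (l3 w x y)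

noncomputable def omniL2 (V : Type*) [AddCommGroup V] [Module ℝ V] :
    (V × Module.End ℝ V) →ₗ[ℝ] (V × Module.End ℝ V) →ₗ[ℝ] (V × Module.End ℝ V) :=
  LinearMap.mk₂ ℝ (fun a b => ((1/2 : ℝ) • (a.2 b.1 - b.2 a.1), a.2 * b.2 - b.2 * a.2))
    (by intro a b c; ext <;> simp <;> module)
    (by intro r a b; ext <;> simp <;> module)
    (by intro a b c; ext <;> simp <;> module)
    (by intro r a b; ext <;> simp <;> module)

noncomputable def omniL2' (V : Type*) [AddCommGroup V] [Module ℝ V] :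
    (V × Module.End ℝ V) →ₗ[ℝ] V →ₗ[ℝ] V :=
  LinearMap.mk₂ ℝ (fun a m => (1/2 : ℝ) • a.2 m)
    (by intro a b c; simp)
    (by intro r a b; simp; module)
    (by intro a b c; simp)
    (by intro r a b; simp; module)

noncomputable def omniL3 (V : Type*) [AddCommGroup V] [Module ℝ V] :
    (V × Module.End ℝ V) →ₗ[ℝ] (V × Module.End ℝ V) →ₗ[ℝ] (V × Module.End ℝ V) →ₗ[ℝ] V :=
  LinearMap.mk₂ ℝ (fun a b =>
    { toFun := fun c => -(1/4 : ℝ) • ((a.2 * b.2 - b.2 * a.2) c.1 + (b.2 * c.2 - c.2 * b.2) a.1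
          + (c.2 * a.2 - a.2 * c.2) b.1)
      map_add' := by intro x y; simp; module
      map_smul' := by intro r x; simp; module })
    (by intro a b c; apply LinearMap.ext; intro x; simp; module)
    (by intro r a b; apply LinearMap.ext; intro x; simp; module)
    (by intro a b c; apply LinearMap.ext; intro x; simp; module)
    (by intro r a b; apply LinearMap.ext; intro x; simp; module)

/-- The 2-term L∞-algebra associated to the omni-Lie algebra `V ⊕ gl(V)`:
`g̃₋₁ = V`, `g̃₀ = V ⊕ gl(V)`, with `l̃₁(m) = (m,0)`,
`l̃₂((u,A),(v,B)) = (½(Av − Bu), [A,B])`, `l̃₂((u,A),m) = ½ Am`,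
`l̃₃((u,A),(v,B),(w,C)) = −¼([A,B]w + [B,C]u + [C,A]v)`. -/
theorem omniLie_twoTermLinfty (V : Type*) [AddCommGroup V] [Module ℝ V] :
    ∃ T : TwoTermLinfty (V × Module.End ℝ V) V,
      (∀ m : V, T.l1 m = (m, 0)) ∧
      (∀ a b : V × Module.End ℝ V, T.l2 a b =
        ((1/2 : ℝ) • (a.2 b.1 - b.2 a.1), a.2 * b.2 - b.2 * a.2)) ∧
      (∀ (a : V × Module.End ℝ V) (m : V), T.l2' a m = (1/2 : ℝ) • a.2 m) ∧
      (∀ a b c : V × Module.End ℝ V, T.l3 a b c =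
        -(1/4 : ℝ) • ((a.2 * b.2 - b.2 * a.2) c.1 + (b.2 * c.2 - c.2 * b.2) a.1
          + (c.2 * a.2 - a.2 * c.2) b.1)) := by
  refine ⟨{
      l1 := LinearMap.inl ℝ V (Module.End ℝ V)
      l2 := omniL2 V
      l2' := omniL2' V
      l3 := omniL3 V
      skew := by
        intro x y
        ext <;> simp [omniL2, omniL2', omniL3] <;> module
      alt₁ := by
        intro x y z
        simp [omniL2, omniL2', omniL3] <;> module
      alt₂ := by
        intro x y z
        simp [omniL2, omniL2', omniL3] <;> module
      ident_a := by
        intro x m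
        ext <;> simp [omniL2, omniL2', omniL3] <;> module
      ident_b := by
        intro m n
        simp [omniL2, omniL2', omniL3] <;> module
      ident_c := by
        intro x y z
        ext <;> simp [omniL2, omniL2', omniL3] <;> module
      ident_d := by
        intro x y m
        simp [omniL2, omniL2', omniL3] <;> module
      ident_e := by
        intro w x y z
        simp [omniL2, omniL2', omniL3] <;> module }, ?_, ?_, ?_, ?_⟩
  · intro m; rfl
  · intro a b; rfl
  · intro a m; rfl
  · intro a b c; rfl
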